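/- Let μ, ν be Borel probability measures on ℝ with finite first moments. Then μ and ν are in convex order (μ ≼_c ν) if and only if ∫₀ˣ (F_μ^{-1}(u) − F_ν^{-1}(u)) du ≥ 0 for every x ∈ [0,1], with equality for x = 1. -/

import Mathlib

open MeasureTheory

noncomputable section

/-- The quantile function `F_α⁻¹(u) = inf { y : α((-∞, y]) ≥ u }`. -/
def quantile (α : Measure ℝ) (u : ℝ) : ℝ :=
  sInf {y : ℝ | ENNReal.ofReal u ≤ α (Set.Iic y)}

/-- Convex order on `ℝ`: `∫ f dμ ≤ ∫ f dν` for all convex `f` integrable w.r.t. both. -/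
def ConvexOrder (μ ν : Measure ℝ) : Prop :=
  ∀ f : ℝ → ℝ, ConvexOn ℝ Set.univ f →
    Integrable f μ → Integrable f ν → ∫ x, f x ∂μ ≤ ∫ x, f x ∂ν

open Set Filter Topology

/-- Lebesgue measure on the open unit interval. -/
def um : Measure ℝ := volume.restrict (Ioo (0:ℝ) 1)

instance um_prob : IsProbabilityMeasure um := ⟨by simp [um]⟩

theorem quantile_eq (μ : Measure ℝ) [IsProbabilityMeasure μ] (u : ℝ) :
    quantile μ u = sInf {y : ℝ | u ≤ ProbabilityTheory.cdf μ y} := by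
  unfold quantile
  congr 1
  ext y
  simp only [mem_ofPred_eq]
  rw [← ProbabilityTheory.ofReal_cdf,
    ENNReal.ofReal_le_ofReal_iff (ProbabilityTheory.cdf_nonneg μ y)]

theorem quantile_le_iff (μ : Measure ℝ) [IsProbabilityMeasure μ] {u : ℝ} (hu : u ∈ Ioo (0:ℝ) 1)
    (y : ℝ) : quantile μ u ≤ y ↔ u ≤ ProbabilityTheory.cdf μ y := by
  rw [quantile_eq]
  set F := ProbabilityTheory.cdf μ with hF
  have hne : {y : ℝ | u ≤ F y}.Nonempty := by
    obtain ⟨z, hz⟩ := ((ProbabilityTheory.tendsto_cdf_atTop μ).eventually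
      (lt_mem_nhds hu.2)).exists
    exact ⟨z, hz.le⟩
  have hbd : BddBelow {y : ℝ | u ≤ F y} := by
    obtain ⟨z, hz⟩ := ((ProbabilityTheory.tendsto_cdf_atBot μ).eventually
      (gt_mem_nhds hu.1)).exists
    refine ⟨z, fun w hw => ?_⟩
    by_contra hlt
    have := F.mono (not_le.1 hlt).le
    have h2 : u ≤ F w := hw
    linarith
  constructor
  · intro h
    have hc : Tendsto F (𝓝[>] y) (𝓝 (F y)) :=
      (F.right_continuous y).mono Ioi_subset_Ici_self
    refine ge_of_tendsto hc ?_
    filter_upwards [self_mem_nhdsWithin] with z hz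
    obtain ⟨w, hw, hwz⟩ := exists_lt_of_csInf_lt hne (lt_of_le_of_lt h hz)
    exact le_trans hw (F.mono hwz.le)
  · intro h
    exact csInf_le hbd h

theorem quantile_mono (μ : Measure ℝ) [IsProbabilityMeasure μ] :
    MonotoneOn (quantile μ) (Ioo (0:ℝ) 1) := by
  intro u hu v hv huv
  rw [quantile_le_iff μ hu]
  exact huv.trans ((quantile_le_iff μ hv _).1 le_rfl)

theorem quantile_aem (μ : Measure ℝ) [IsProbabilityMeasure μ] :
    AEMeasurable (quantile μ) um :=
  aemeasurable_restrict_of_monotoneOn measurableSet_Ioo (quantile_mono μ)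

theorem quantile_map (μ : Measure ℝ) [IsProbabilityMeasure μ] :
    um.map (quantile μ) = μ := by
  have : IsProbabilityMeasure (um.map (quantile μ)) :=
    Measure.isProbabilityMeasure_map (quantile_aem μ)
  refine Measure.ext_of_Iic _ _ fun y => ?_
  rw [Measure.map_apply_of_aemeasurable (quantile_aem μ) measurableSet_Iic, um,
    Measure.restrict_apply' measurableSet_Ioo, ← ProbabilityTheory.ofReal_cdf]
  have h1 := ProbabilityTheory.cdf_le_one μ y
  have : quantile μ ⁻¹' Iic y ∩ Ioo 0 1 = Iic (ProbabilityTheory.cdf μ y) ∩ Ioo 0 1 := by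
    ext u
    simp only [mem_inter_iff, mem_preimage, mem_Iic]
    exact and_congr_left fun hu => quantile_le_iff μ hu y
  rw [this]
  apply le_antisymm
  · calc _ ≤ volume (Ioc 0 (ProbabilityTheory.cdf μ y)) :=
        measure_mono (fun u hu => And.intro hu.2.1 hu.1)
      _ = _ := by simp
  · calc _ = volume (Ioo 0 (ProbabilityTheory.cdf μ y)) := by simp
      _ ≤ _ := by
        refine measure_mono fun u hu => ?_
        exact ⟨hu.2.le, hu.1, hu.2.trans_le h1⟩

theorem quantile_integral (μ : Measure ℝ) [IsProbabilityMeasure μ] {f : ℝ → ℝ}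
    (hf : AEStronglyMeasurable f μ) : ∫ x, f x ∂μ = ∫ u, f (quantile μ u) ∂um := by
  have h := quantile_map μ
  conv_lhs => rw [← h]
  exact integral_map (quantile_aem μ) (by rwa [h])

theorem quantile_integrable (μ : Measure ℝ) [IsProbabilityMeasure μ] {f : ℝ → ℝ}
    (hf : Integrable f μ) : Integrable (fun u => f (quantile μ u)) um := by
  have h := quantile_map μ
  rw [← h] at hf
  exact hf.comp_aemeasurable (quantile_aem μ)

theorem intervalIntegral_eq (h : ℝ → ℝ) {a b : ℝ} (ha : 0 ≤ a) (hab : a ≤ b) (hb : b ≤ 1) :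
    ∫ u in a..b, h u = ∫ u in Ioo a b, h u ∂um := by
  rw [intervalIntegral.integral_of_le hab, integral_Ioc_eq_integral_Ioo, um,
    Measure.restrict_restrict measurableSet_Ioo,
    inter_eq_left.2 (Ioo_subset_Ioo ha hb)]

theorem um_intervalIntegrable {h : ℝ → ℝ} (hh : Integrable h um) {a b : ℝ} (ha : 0 ≤ a)
    (hab : a ≤ b) (hb : b ≤ 1) : IntervalIntegrable h volume a b := by
  rw [intervalIntegrable_iff_integrableOn_Ioo_of_le hab]
  exact IntegrableOn.mono_set hh (Ioo_subset_Ioo ha hb)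

theorem cov_le (g h : ℝ → ℝ) (M : ℝ) (hg : MonotoneOn g (Ioo (0:ℝ) 1)) (hM : ∀ u, |g u| ≤ M)
    (hh : Integrable h um) (H : ∀ x ∈ Icc (0:ℝ) 1, 0 ≤ ∫ u in (0:ℝ)..x, h u)
    (H1 : ∫ u in (0:ℝ)..1, h u = 0) : ∫ u, g u * h u ∂um ≤ 0 := by
  have hgm : AEMeasurable g um := aemeasurable_restrict_of_monotoneOn measurableSet_Ioo hg
  have H1' : ∫ u, h u ∂um = 0 := by
    rw [← H1, intervalIntegral_eq h le_rfl zero_le_one le_rfl, um,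
      Measure.restrict_restrict measurableSet_Ioo, inter_self]
  have hM0 : 0 ≤ M := (abs_nonneg _).trans (hM 0)
  have hgh : Integrable (fun u => g u * h u) um :=
    hh.bdd_mul hgm.aestronglyMeasurable (ae_of_all _ hM)
  let tm : Measure ℝ := volume.restrict (Ioc (-M) M)
  let K : ℝ → ℝ → ℝ := fun t u => {p : ℝ × ℝ | p.1 < g p.2}.indicator (fun p => h p.2) (t, u)
  have hK : Integrable (Function.uncurry K) (tm.prod um) := by
    have : Function.uncurry K = {p : ℝ × ℝ | p.1 < g p.2}.indicator (fun p => h p.2) := by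
      ext ⟨a, b⟩; rfl
    rw [this]
    refine (hh.comp_snd tm).indicator₀ ?_
    exact nullMeasurableSet_lt measurable_fst.aemeasurable hgm.comp_snd
  have swap := integral_integral_swap hK
  have e1 : ∀ u, ∫ t, K t u ∂tm = (g u + M) * h u := by
    intro u
    have hu := abs_le.1 (hM u)
    have : (fun t => K t u) = (Iio (g u)).indicator (fun _ => h u) := by
      ext t
      simp [K, indicator]
    rw [this, integral_indicator measurableSet_Iio]
    simp only [tm]
    rw [Measure.restrict_restrict measurableSet_Iio, setIntegral_const]
    have : volume (Iio (g u) ∩ Ioc (-M) M) = ENNReal.ofReal (g u + M) := by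
      apply le_antisymm
      · calc _ ≤ volume (Ioo (-M) (g u)) := measure_mono fun t ht => ⟨ht.2.1, ht.1⟩
          _ = _ := by simp
      · calc _ = volume (Ioo (-M) (g u)) := by simp
          _ ≤ _ := by
            refine measure_mono fun t ht => ?_
            exact ⟨ht.2, ht.1, ht.2.le.trans hu.2⟩
    rw [Measure.real, this, ENNReal.toReal_ofReal (by linarith), smul_eq_mul]
  have e2 : ∀ t, ∫ u, K t u ∂um ≤ 0 := by
    intro t
    have hs : NullMeasurableSet {u | t < g u} um :=
      nullMeasurableSet_lt aemeasurable_const hgm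
    have : (fun u => K t u) = {u | t < g u}.indicator h := by
      ext u
      simp [K, indicator]
    rw [this, integral_indicator₀ hs]
    by_cases hne : ({u | t < g u} ∩ Ioo 0 1).Nonempty
    · set A := {u | t < g u} ∩ Ioo 0 1 with hA
      set s := sInf A with hsA
      have hbd : BddBelow A := ⟨0, fun u hu => hu.2.1.le⟩
      have hs0 : 0 ≤ s := le_csInf hne fun u hu => hu.2.1.le
      have hs1 : s ≤ 1 := by
        obtain ⟨u, hu⟩ := hne
        exact (csInf_le hbd hu).trans hu.2.2.le
      have hset : ({u | t < g u} : Set ℝ) =ᵐ[um] Ioo s 1 := by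
        have h1 : ∀ᵐ u ∂um, u ∈ Ioo (0:ℝ) 1 := ae_restrict_mem measurableSet_Ioo
        have h2 : ∀ᵐ u ∂um, u ≠ s := ae_restrict_of_ae (Measure.ae_ne volume s)
        rw [eventuallyEq_set]
        filter_upwards [h1, h2] with u hu hus
        constructor
        · intro htu
          exact ⟨lt_of_le_of_ne (csInf_le hbd ⟨htu, hu⟩) hus.symm, hu.2⟩
        · intro hu'
          obtain ⟨w, hw, hwu⟩ := exists_lt_of_csInf_lt hne hu'.1
          exact lt_of_lt_of_le hw.1 (hg hw.2 hu hwu.le)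
      rw [setIntegral_congr_set hset, ← intervalIntegral_eq h hs0 hs1 le_rfl]
      have := intervalIntegral.integral_add_adjacent_intervals
        (um_intervalIntegrable hh le_rfl hs0 hs1) (um_intervalIntegrable hh hs0 hs1 le_rfl)
      have := H s ⟨hs0, hs1⟩
      linarith
    · have : um {u | t < g u} = 0 := by
        rw [um, Measure.restrict_apply' measurableSet_Ioo, not_nonempty_iff_eq_empty.1 hne]
        simp
      rw [Measure.restrict_eq_zero.2 this]
      simp
  have : ∫ u, g u * h u ∂um = ∫ u, ∫ t, K t u ∂tm ∂um := by
    simp_rw [e1, add_mul]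
    rw [integral_add hgh (hh.const_mul M), integral_const_mul, H1']
    simp
  rw [this, ← swap]
  exact integral_nonpos e2

theorem exists_subgrad {f : ℝ → ℝ} (hf : ConvexOn ℝ univ f) :
    ∃ d : ℝ → ℝ, Monotone d ∧ ∀ x y, f x + d x * (y - x) ≤ f y := by
  have key : ∀ x y, f x + derivWithin f (Ioi x) x * (y - x) ≤ f y := by
    intro x y
    have hx : x ∈ interior (univ : Set ℝ) := by simp
    rcases lt_trichotomy x y with h | h | h
    · have := hf.rightDeriv_le_slope_of_mem_interior hx (mem_univ y) h
      rw [slope_def_field, le_div_iff₀ (by linarith)] at this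
      linarith
    · simp [h]
    · have h1 := hf.slope_le_leftDeriv_of_mem_interior (mem_univ y) hx h
      have := h1.trans (hf.leftDeriv_le_rightDeriv_of_mem_interior hx)
      rw [slope_def_field, div_le_iff₀ (by linarith)] at this
      linarith
  refine ⟨_, ?_, key⟩
  intro x y hxy
  rcases hxy.eq_or_lt with h | h
  · rw [h]
  · have h1 := key x y
    have h2 := key y x
    by_contra hc
    simp only [not_le] at hc
    nlinarith

theorem stmt2 (μ ν : Measure ℝ)
    [IsProbabilityMeasure μ] [IsProbabilityMeasure ν]
    (hμ : Integrable (fun x => |x|) μ) (hν : Integrable (fun y => |y|) ν) :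
    ConvexOrder μ ν ↔
      ((∀ x ∈ Set.Icc (0 : ℝ) 1,
          0 ≤ ∫ u in (0 : ℝ)..x, (quantile μ u - quantile ν u)) ∧
        (∫ u in (0 : ℝ)..1, (quantile μ u - quantile ν u)) = 0) := by
  have iμ : Integrable (fun x : ℝ => x) μ :=
    (integrable_norm_iff measurable_id.aestronglyMeasurable).1 hμ
  have iν : Integrable (fun x : ℝ => x) ν :=
    (integrable_norm_iff measurable_id.aestronglyMeasurable).1 hν
  have qμ : Integrable (quantile μ) um := quantile_integrable μ iμ
  have qν : Integrable (quantile ν) um := quantile_integrable ν iν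
  have um_univ : ∀ h : ℝ → ℝ, ∫ u in (0:ℝ)..1, h u = ∫ u, h u ∂um := by
    intro h
    rw [intervalIntegral_eq h le_rfl zero_le_one le_rfl, um,
      Measure.restrict_restrict measurableSet_Ioo, inter_self]
  constructor
  · intro hc
    have heq : (∫ u in (0 : ℝ)..1, (quantile μ u - quantile ν u)) = 0 := by
      have h1 := hc (fun x => x) (convexOn_id convex_univ) iμ iν
      have h2 := hc (fun x => -x) ((concaveOn_id convex_univ).neg) iμ.neg iν.neg
      rw [integral_neg, integral_neg] at h2
      rw [um_univ, integral_sub qμ qν, ← quantile_integral μ iμ.1, ← quantile_integral ν iν.1]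
      linarith
    refine ⟨?_, heq⟩
    intro x hx
    rcases hx.1.eq_or_lt with h0 | h0
    · simp [← h0]
    rcases hx.2.eq_or_lt with h1 | h1
    · rw [h1, heq]
    have hxI : x ∈ Ioo (0:ℝ) 1 := ⟨h0, h1⟩
    set c := quantile ν x with hcdef
    have hconv : ConvexOn ℝ univ (fun y : ℝ => max (c - y) 0) := by
      have h1 : ConvexOn ℝ univ (fun y : ℝ => c - y) := by
        have := (convexOn_const (𝕜 := ℝ) c (convex_univ (E := ℝ))).sub (concaveOn_id (𝕜 := ℝ) (convex_univ (E := ℝ)))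
        exact this
      exact h1.sup (convexOn_const 0 convex_univ)
    have pμ : Integrable (fun y : ℝ => max (c - y) 0) μ :=
      ((integrable_const c).sub iμ).pos_part
    have pν : Integrable (fun y : ℝ => max (c - y) 0) ν :=
      ((integrable_const c).sub iν).pos_part
    have h := hc _ hconv pμ pν
    rw [quantile_integral μ pμ.1, quantile_integral ν pν.1] at h
    have a1 : ∫ u in Ioo 0 x, (c - quantile μ u) ∂um ≤
        ∫ u, max (c - quantile μ u) 0 ∂um := by
      calc _ ≤ ∫ u in Ioo 0 x, max (c - quantile μ u) 0 ∂um :=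
            integral_mono ((integrable_const c).sub qμ).integrableOn
              (quantile_integrable μ pμ).integrableOn (fun u => le_max_left _ _)
        _ ≤ _ := setIntegral_le_integral (quantile_integrable μ pμ)
              (ae_of_all _ fun u => le_max_right _ _)
    have a2 : ∫ u, max (c - quantile ν u) 0 ∂um = ∫ u in Ioo 0 x, (c - quantile ν u) ∂um := by
      rw [← integral_indicator measurableSet_Ioo]
      refine integral_congr_ae ?_
      have h1 : ∀ᵐ u ∂um, u ∈ Ioo (0:ℝ) 1 := ae_restrict_mem measurableSet_Ioo
      filter_upwards [h1] with u hu
      by_cases hux : u < x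
      · rw [indicator_of_mem (show u ∈ Ioo 0 x from ⟨hu.1, hux⟩)]
        exact max_eq_left (sub_nonneg.2 (quantile_mono ν hu hxI hux.le))
      · rw [indicator_of_notMem (fun hh => hux hh.2)]
        exact max_eq_right (sub_nonpos.2 (quantile_mono ν hxI hu (not_lt.1 hux)))
    rw [intervalIntegral_eq _ le_rfl hx.1 hx.2]
    have a3 : ∫ u in Ioo 0 x, (quantile μ u - quantile ν u) ∂um =
        ∫ u in Ioo 0 x, (c - quantile ν u) ∂um - ∫ u in Ioo 0 x, (c - quantile μ u) ∂um := by
      have b1 : IntegrableOn (fun u => c - quantile ν u) (Ioo 0 x) um :=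
        ((integrable_const c).sub qν).integrableOn
      have b2 : IntegrableOn (fun u => c - quantile μ u) (Ioo 0 x) um :=
        ((integrable_const c).sub qμ).integrableOn
      rw [← integral_sub b1 b2]
      congr 1
      ext u
      ring
    rw [a3]
    linarith
  · rintro ⟨H, H1⟩ f hf fμ fν
    obtain ⟨d, hd, key⟩ := exists_subgrad hf
    let cl : ℕ → ℝ → ℝ := fun n x => max (-(n:ℝ)) (min x n)
    have clmono : ∀ n, Monotone (cl n) := fun n x y h =>
      max_le_max le_rfl (min_le_min h le_rfl)
    have cl1 : ∀ (n : ℕ) x, -(n:ℝ) ≤ cl n x := fun n x => le_max_left _ _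
    have cl2 : ∀ (n : ℕ) x, cl n x ≤ n := fun n x => max_le (by linarith [Nat.cast_nonneg (α := ℝ) n]) (min_le_right _ _)
    let F : ℕ → ℝ → ℝ := fun n x => f (cl n x) + d (cl n x) * (x - cl n x)
    have Fle : ∀ n x, F n x ≤ f x := fun n x => key _ _
    have Fge : ∀ n x, f 0 + d 0 * x ≤ F n x := by
      intro n x
      have h1 := key 0 (cl n x)
      have h2 : d 0 * (x - cl n x) ≤ d (cl n x) * (x - cl n x) := by
        have hn := Nat.cast_nonneg (α := ℝ) n
        rcases le_total (cl n x) x with h | h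
        · rcases h.eq_or_lt with h' | h'
          · simp [h']
          · refine mul_le_mul_of_nonneg_right (hd ?_) (by linarith)
            simp only [cl] at h' ⊢
            grind
        · rcases h.eq_or_lt with h' | h'
          · simp [← h']
          · refine mul_le_mul_of_nonpos_right (hd ?_) (by linarith)
            simp only [cl] at h' ⊢
            grind
      simp only [F]
      linarith
    have Fev : ∀ x, ∀ᶠ n in atTop, F n x = f x := by
      intro x
      obtain ⟨N, hN⟩ := exists_nat_ge |x|
      filter_upwards [eventually_ge_atTop N] with n hn
      have : |x| ≤ (n:ℝ) := hN.trans (by exact_mod_cast hn)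
      have hx := abs_le.1 this
      have : cl n x = x := by simp [cl, hx.1, hx.2]
      simp [F, this]
    have fcont : Continuous f := by
      have := hf.continuousOn isOpen_univ
      exact continuousOn_univ.1 this
    have Fmeas : ∀ n, Measurable (F n) := by
      intro n
      have hm : Measurable (cl n) := (clmono n).measurable
      exact (fcont.measurable.comp hm).add ((hd.measurable.comp hm).mul (measurable_id.sub hm))
    have lin : Integrable (fun x : ℝ => f 0 + d 0 * x) μ :=
      (integrable_const _).add (iμ.const_mul _)
    have bnd : ∀ n x, ‖F n x‖ ≤ ‖f x‖ + ‖f 0 + d 0 * x‖ := by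
      intro n x
      simp only [Real.norm_eq_abs]
      have := Fle n x
      have := Fge n x
      grind
    have Fint : ∀ n, Integrable (F n) μ := fun n =>
      (fμ.norm.add lin.norm).mono' (Fmeas n).aestronglyMeasurable (ae_of_all _ (bnd n))
    have lim : Tendsto (fun n => ∫ x, F n x ∂μ) atTop (𝓝 (∫ x, f x ∂μ)) := by
      refine tendsto_integral_of_dominated_convergence _
        (fun n => (Fmeas n).aestronglyMeasurable) (fμ.norm.add lin.norm)
        (fun n => ae_of_all _ (bnd n)) (ae_of_all _ fun x => ?_)
      exact tendsto_const_nhds.congr' ((Fev x).mono fun n h => h.symm)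
    refine le_of_tendsto' lim fun n => ?_
    rw [quantile_integral μ (Fint n).1, quantile_integral ν fν.1]
    have hM : ∀ u, |d (cl n (quantile μ u))| ≤ max |d (-(n:ℝ))| |d n| := by
      intro u
      exact abs_le_max_abs_abs (hd (cl1 _ _)) (hd (cl2 _ _))
    have hmono : MonotoneOn (fun u => d (cl n (quantile μ u))) (Ioo (0:ℝ) 1) :=
      fun u hu v hv huv => hd (clmono n (quantile_mono μ hu hv huv))
    have hcov := cov_le (fun u => d (cl n (quantile μ u))) _ _ hmono hM (qμ.sub qν) H H1
    have hi : Integrable (fun u => d (cl n (quantile μ u)) * (quantile μ u - quantile ν u)) um :=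
      (qμ.sub qν).bdd_mul (aemeasurable_restrict_of_monotoneOn measurableSet_Ioo
        hmono).aestronglyMeasurable (ae_of_all _ hM)
    have hle : ∫ u, F n (quantile μ u) ∂um ≤ ∫ u, (f (quantile ν u) +
        d (cl n (quantile μ u)) * (quantile μ u - quantile ν u)) ∂um := by
      refine integral_mono (quantile_integrable μ (Fint n))
        ((quantile_integrable ν fν).add hi) fun u => ?_
      have := key (cl n (quantile μ u)) (quantile ν u)
      simp only [F]
      linarith
    rw [integral_add (quantile_integrable ν fν) hi] at hle
    simp only [Pi.sub_apply] at hcov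
    linarith
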